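/- Let F be a field and let f(x_1,...,x_n) = a_1 x_1^k + ... + a_n x_n^k + g(x_1,...,x_n) be a polynomial over F, where k is a positive integer with n ≤ k, a_1,...,a_n are nonzero elements of F, and g is a polynomial of total degree less than k. Let A_1,...,A_n be finite subsets of F with |A_i| ≥ i for i = 1,...,n. Then the restricted value set V = {f(x_1,...,x_n) : x_1 ∈ A_1, ..., x_n ∈ A_n, and x_i ≠ x_j whenever i ≠ j} satisfies |V| ≥ min{p(F), ⌊(|A_1|-1)/k⌋ + ⌊(|A_2|-2)/k⌋ + ... + ⌊(|A_n|-n)/k⌋ + 1}. -/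

import Mathlib

/-- `p(F)`: the characteristic of `F` if positive, `+∞` if `F` has characteristic zero,
as an extended natural number. -/
noncomputable def fieldCharE (F : Type*) [Field F] : ℕ∞ :=
  if ringChar F = 0 then ⊤ else (ringChar F : ℕ∞)

lemma aux_exists_le {ι : Type*} (s : Finset ι) (q : ι → ℕ) (M : ℕ) (h : M ≤ ∑ i ∈ s, q i) :
    ∃ q' : ι → ℕ, (∀ i, q' i ≤ q i) ∧ ∑ i ∈ s, q' i = M := by
  classical
  induction M with
  | zero => exact ⟨fun _ => 0, by simp, by simp⟩
  | succ M ih =>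
    obtain ⟨q', h1, h2⟩ := ih (by omega)
    have : ∃ i ∈ s, q' i < q i := by
      apply Finset.exists_lt_of_sum_lt
      omega
    obtain ⟨j, hj, hlt⟩ := this
    refine ⟨fun i => q' i + if i = j then 1 else 0, ?_, ?_⟩
    · intro i
      by_cases hi : i = j
      · subst hi; simpa using hlt
      · simpa [hi] using h1 i
    · rw [Finset.sum_add_distrib, h2]
      simp [hj]

open MvPolynomial in
lemma aux_prod {F : Type*} [Field F] {σ : Type*} (k : ℕ) (hk : 0 < k)
    (s g : MvPolynomial σ F) (hs : s.totalDegree ≤ k) (hg : g.totalDegree < k)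
    (m : Multiset F) :
    ∃ r : MvPolynomial σ F, (m.map (fun v => s + g - C v)).prod = s ^ (Multiset.card m) + r ∧
      (r = 0 ∨ r.totalDegree < Multiset.card m * k) := by
  induction m using Multiset.induction_on with
  | empty => exact ⟨0, by simp, Or.inl rfl⟩
  | cons v m ih =>
    obtain ⟨r, h1, h2⟩ := ih
    refine ⟨(s + g - C v) * r + (g - C v) * s ^ (Multiset.card m), ?_, Or.inr ?_⟩
    · rw [Multiset.map_cons, Multiset.prod_cons, h1, Multiset.card_cons]; ring
    · have hgv : (g - C v).totalDegree < k :=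
        lt_of_le_of_lt (totalDegree_sub_C_le g v) hg
      have hsv : (s + g - C v).totalDegree ≤ k :=
        (totalDegree_sub_C_le _ v).trans
          ((totalDegree_add _ _).trans (max_le hs hg.le))
      rw [Multiset.card_cons, add_mul, one_mul]
      refine lt_of_le_of_lt (totalDegree_add _ _) (max_lt ?_ ?_)
      · rcases h2 with rfl | h2
        · simpa using by omega
        · have := totalDegree_mul (s + g - C v) r
          omega
      · have h3 := totalDegree_mul (g - C v) (s ^ (Multiset.card m))
        have h4 := (totalDegree_pow s (Multiset.card m)).trans (Nat.mul_le_mul_left _ hs)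
        omega

open MvPolynomial in
lemma aux_term {F : Type*} [Field F] (n k : ℕ) (a : Fin n → F) (c : F) (m : Fin n → ℕ)
    (z : ℤ) (τ : Fin n → ℕ) :
    (C c * ∏ i, (C (a i) * X i ^ k) ^ m i) * ((z : MvPolynomial (Fin n) F) * ∏ i, X i ^ τ i) =
      monomial (Finsupp.equivFunOnFinite.symm (fun i => k * m i + τ i))
        (c * (∏ i, a i ^ m i) * (z : F)) := by
  rw [monomial_eq, Finsupp.prod_fintype _ _ (by simp)]
  simp only [Finsupp.equivFunOnFinite_symm_apply_apply, map_mul, map_prod, map_pow, map_intCast,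
    mul_pow, pow_add, Finset.prod_mul_distrib, pow_mul]
  ring

open MvPolynomial in
lemma aux_coeff {F : Type*} [Field F] (n k : ℕ) (hk : 0 < k) (hnk : n ≤ k) (a : Fin n → F)
    (q : Fin n → ℕ) :
    coeff (Finsupp.equivFunOnFinite.symm (fun i : Fin n => k * q i + (i : ℕ)))
      ((∑ i, C (a i) * X i ^ k) ^ (∑ i, q i) *
        (Matrix.vandermonde (fun i : Fin n => (X i : MvPolynomial (Fin n) F))).det) =
      (Nat.multinomial Finset.univ q : F) * ∏ i, a i ^ q i := by
  rw [Finset.sum_pow_eq_sum_piAntidiag, ← Matrix.det_transpose, Matrix.det_apply', Finset.sum_mul_sum]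
  simp only [Matrix.transpose_apply, Matrix.vandermonde_apply]
  have key : ∀ (m : Fin n → ℕ) (τ : Equiv.Perm (Fin n)),
      ((Nat.multinomial Finset.univ m : MvPolynomial (Fin n) F) *
        ∏ i, (C (a i) * X i ^ k) ^ m i) *
        ((((Equiv.Perm.sign τ : ℤˣ) : ℤ) : MvPolynomial (Fin n) F) * ∏ i, X i ^ ((τ i : Fin n) : ℕ)) =
      monomial (Finsupp.equivFunOnFinite.symm (fun i => k * m i + (τ i : ℕ)))
        ((Nat.multinomial Finset.univ m : F) * (∏ i, a i ^ m i) *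
          (((Equiv.Perm.sign τ : ℤˣ) : ℤ) : F)) := by
    intro m τ
    rw [← aux_term, map_natCast]
  have inj : ∀ (m : Fin n → ℕ) (τ : Equiv.Perm (Fin n)),
      (Finsupp.equivFunOnFinite.symm (fun i => k * m i + (τ i : ℕ)) =
        Finsupp.equivFunOnFinite.symm (fun i : Fin n => k * q i + (i : ℕ))) → m = q ∧ τ = 1 := by
    intro m τ h
    have h' := fun i => congrFun (Finsupp.equivFunOnFinite.symm.injective h) i
    constructor
    · funext i
      have := congrArg (· / k) (h' i)
      simpa [Nat.mul_add_div hk, Nat.div_eq_of_lt ((τ i).2.trans_le hnk),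
        Nat.div_eq_of_lt (i.2.trans_le hnk)] using this
    · ext i
      have := congrArg (· % k) (h' i)
      simpa [Nat.mul_add_mod, Nat.mod_eq_of_lt ((τ i).2.trans_le hnk),
        Nat.mod_eq_of_lt (i.2.trans_le hnk)] using this
  simp only [key, coeff_sum, coeff_monomial]
  rw [Finset.sum_eq_single q, Finset.sum_eq_single 1]
  · simp
  · intro τ _ hτ
    rw [if_neg]
    exact fun h => hτ (inj _ _ h).2
  · simp
  · intro m _ hm
    apply Finset.sum_eq_zero
    intro τ _
    rw [if_neg]
    exact fun h => hm (inj _ _ h).1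
  · intro h
    exact absurd (by simp [Finset.mem_piAntidiag]) h

open MvPolynomial in
lemma aux_vand {F : Type*} [Field F] (n : ℕ) :
    ((Matrix.vandermonde (fun i : Fin n => (X i : MvPolynomial (Fin n) F))).det).totalDegree
      ≤ ∑ i : Fin n, (i : ℕ) := by
  rw [← Matrix.det_transpose, Matrix.det_apply']
  simp only [Matrix.transpose_apply, Matrix.vandermonde_apply]
  apply totalDegree_finsetSum_le
  intro τ _
  rw [← map_intCast (C : F →+* MvPolynomial (Fin n) F)]
  refine (totalDegree_mul _ _).trans ?_
  rw [totalDegree_C, zero_add]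
  refine (totalDegree_finsetProd _ _).trans ?_
  rw [← Equiv.sum_comp τ (fun i : Fin n => (i : ℕ))]
  apply Finset.sum_le_sum
  intro i _
  rw [totalDegree_X_pow]

open MvPolynomial in
lemma aux_main {F : Type*} [Field F] (n k : ℕ) (hk : 0 < k) (hnk : n ≤ k)
    (a : Fin n → F) (ha : ∀ i, a i ≠ 0)
    (g : MvPolynomial (Fin n) F) (hg : g.totalDegree < k)
    (A : Fin n → Finset F) (q : Fin n → ℕ) (hq : ∀ i : Fin n, k * q i + (i : ℕ) < (A i).card)
    (hN : (((∑ i, q i).factorial : ℕ) : F) ≠ 0) (V : Finset F)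
    (hV : ∀ x : Fin n → F, (∀ i, x i ∈ A i) → Function.Injective x →
      eval x ((∑ i, C (a i) * X i ^ k) + g) ∈ V) :
    ∑ i, q i + 1 ≤ V.card := by
  by_contra hlt
  set N := ∑ i, q i with hNdef
  set s : MvPolynomial (Fin n) F := ∑ i, C (a i) * X i ^ k with hs
  set D := (Matrix.vandermonde (fun i : Fin n => (X i : MvPolynomial (Fin n) F))).det with hD
  set t : Fin n →₀ ℕ := Finsupp.equivFunOnFinite.symm (fun i : Fin n => k * q i + (i : ℕ)) with ht
  have hsd : s.totalDegree ≤ k := by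
    apply totalDegree_finsetSum_le
    intro i _
    refine (totalDegree_mul _ _).trans ?_
    rw [totalDegree_C, totalDegree_X_pow, zero_add]
  let m : Multiset F := V.val + Multiset.replicate (N - V.card) 0
  have hm : Multiset.card m = N := by
    simp only [m, Multiset.card_add, Multiset.card_replicate, Finset.card_val]; omega
  obtain ⟨r, hr1, hr2⟩ := aux_prod k hk s g hsd hg m
  rw [hm] at hr1 hr2
  have htdeg : t.degree = N * k + ∑ i : Fin n, (i : ℕ) := by
    rw [Finsupp.degree_eq_sum]
    simp only [ht, Finsupp.equivFunOnFinite_symm_apply_apply, Finset.sum_add_distrib,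
      ← Finset.mul_sum]
    rw [mul_comm]
  have hDd : D.totalDegree ≤ ∑ i : Fin n, (i : ℕ) := aux_vand n
  set P := (m.map (fun v => s + g - C v)).prod * D with hP
  have hcoeff : coeff t P ≠ 0 := by
    have hr0 : coeff t (r * D) = 0 := by
      rcases hr2 with rfl | hr2
      · simp
      · apply coeff_eq_zero_of_totalDegree_lt
        have := totalDegree_mul r D
        have h2 : ∑ i ∈ t.support, t i = t.degree := rfl
        rw [h2]
        omega
    rw [hP, hr1, add_mul, coeff_add, hr0, add_zero, aux_coeff n k hk hnk]
    apply mul_ne_zero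
    · intro h0
      apply hN
      rw [← Nat.multinomial_spec Finset.univ q]
      push_cast
      rw [h0, mul_zero]
    · exact Finset.prod_ne_zero_iff.2 fun i _ => pow_ne_zero _ (ha i)
  have hPdeg : P.totalDegree = t.degree := by
    apply le_antisymm
    · rw [htdeg]
      refine (totalDegree_mul _ _).trans (add_le_add ?_ hDd)
      rw [hr1]
      refine (totalDegree_add _ _).trans (max_le ?_ ?_)
      · exact (totalDegree_pow s N).trans (Nat.mul_le_mul_left _ hsd)
      · rcases hr2 with rfl | hr2
        · simp
        · exact hr2.le
    · exact le_totalDegree (mem_support_iff.2 hcoeff)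
  obtain ⟨x, hx, hxe⟩ := combinatorial_nullstellensatz_exists_eval_nonzero P t hcoeff hPdeg A
    (fun i => by simpa [ht] using hq i)
  apply hxe
  rw [hP, map_mul]
  by_cases hinj : Function.Injective x
  · have hmem := hV x hx hinj
    rw [map_multiset_prod, Multiset.map_map, Multiset.prod_eq_zero, zero_mul]
    rw [Multiset.mem_map]
    refine ⟨_, Multiset.mem_add.2 (Or.inl hmem), ?_⟩
    simp
  · have : eval x D = 0 := by
      rw [hD, Matrix.det_vandermonde, map_prod]
      simp only [map_prod, map_sub, eval_X]
      rw [← Matrix.det_vandermonde]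
      by_contra h
      exact hinj (Matrix.det_vandermonde_ne_zero_iff.1 h)
    rw [this, mul_zero]

theorem stmt5 {F : Type*} [Field F] (n k : ℕ) (hk : 0 < k) (hnk : n ≤ k)
    (a : Fin n → F) (ha : ∀ i, a i ≠ 0)
    (g f : MvPolynomial (Fin n) F) (hg : g.totalDegree < k)
    (hf : f = (∑ i, MvPolynomial.C (a i) * MvPolynomial.X i ^ k) + g)
    (A : Fin n → Finset F) (hA : ∀ i : Fin n, (i : ℕ) + 1 ≤ (A i).card) :
    min (fieldCharE F) (((∑ i : Fin n, ((A i).card - ((i : ℕ) + 1)) / k : ℕ) + 1 : ℕ))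
      ≤ (({y | ∃ x : Fin n → F, (∀ i, x i ∈ A i) ∧ Function.Injective x ∧
            MvPolynomial.eval x f = y} : Set F).ncard : ℕ∞) := by
  classical
  subst hf
  set S : Set F := {y | ∃ x : Fin n → F, (∀ i, x i ∈ A i) ∧ Function.Injective x ∧
            MvPolynomial.eval x ((∑ i, MvPolynomial.C (a i) * MvPolynomial.X i ^ k) + g) = y} with hS
  have hfin : S.Finite := by
    refine ((Fintype.piFinset A).image (fun x => MvPolynomial.eval x
      ((∑ i, MvPolynomial.C (a i) * MvPolynomial.X i ^ k) + g))).finite_toSet.subset ?_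
    rintro y ⟨x, hx, -, rfl⟩
    exact Finset.mem_coe.2 (Finset.mem_image_of_mem _ (Fintype.mem_piFinset.2 hx))
  have main : ∀ q : Fin n → ℕ, (∀ i, q i ≤ ((A i).card - ((i : ℕ) + 1)) / k) →
      (((∑ i, q i).factorial : ℕ) : F) ≠ 0 → ∑ i, q i + 1 ≤ S.ncard := by
    intro q hq hN
    rw [Set.ncard_eq_toFinset_card S hfin]
    refine aux_main n k hk hnk a ha g hg A q ?_ hN _ ?_
    · intro i
      have h1 := (Nat.le_div_iff_mul_le hk).1 (hq i)
      have h2 := hA i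
      rw [mul_comm] at h1
      omega
    · intro x hx hinj
      exact hfin.mem_toFinset.2 ⟨x, hx, hinj, rfl⟩
  set N := ∑ i : Fin n, ((A i).card - ((i : ℕ) + 1)) / k with hN
  by_cases hp : ringChar F = 0
  · refine (min_le_right _ _).trans ?_
    have : CharZero F := (CharP.ringChar_zero_iff_CharZero F).1 hp
    exact_mod_cast main _ (fun i => le_rfl) (Nat.cast_ne_zero.2 (Nat.factorial_ne_zero _))
  · have hprime : (ringChar F).Prime :=
      (CharP.char_is_prime_or_zero F (ringChar F)).resolve_right hp
    have hpos := hprime.pos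
    obtain ⟨q, hq1, hq2⟩ := aux_exists_le Finset.univ
      (fun i : Fin n => ((A i).card - ((i : ℕ) + 1)) / k) (min N (ringChar F - 1))
      (min_le_left _ _)
    have h := main q hq1 (by
      rw [Ne, CharP.cast_eq_zero_iff F (ringChar F), hprime.dvd_factorial, hq2]
      omega)
    rw [hq2] at h
    rw [fieldCharE, if_neg hp]
    have h' : min (ringChar F) (N + 1) ≤ S.ncard := by omega
    rcases min_le_iff.1 h' with h1 | h1
    · exact (min_le_left _ _).trans (Nat.cast_le.2 h1)
    · exact (min_le_right _ _).trans (Nat.cast_le.2 h1)
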